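/- arXiv:2304.00593 — 3 statements merged into one kernel-verified Lean document; each statement's English description precedes it below -/
import Mathlib

section
/- Let m ≥ 1 and σ > 0. Let Z be an ℝ^m-valued random vector that is σ-subgaussian, let Q : ℝ^m → ℤ^m be elementwise rounding to the nearest integer, and let g : ℤ^m → {1, 2, 3, …} be a bijection such that ‖a‖_∞ > ‖b‖_∞ implies g(a) > g(b). Then for every integer s ≥ 2^m + 1, P[g(Q(Z)) = s] ≤ 2m · exp(−(1/(2σ²)) · ((1/2)(s−1)^{1/m} − 1)²), where (s−1)^{1/m} denotes the real m-th root of s−1. -/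
/-!
Suppose `g` enumerates `ℤ^m` in order of increasing sup norm. The values `1, …, g a` are then all
taken on the cube of radius `‖a‖_∞`, so `g a ≤ (2 ‖a‖_∞ + 1)^m`. Rounding increases the sup norm by
at most `1/2`; hence `s ≤ g (Q x)` forces `(s - 1)^{1/m} ≤ 2 ‖x‖_∞ + 2`, that is, `‖x‖_∞ ≥ u` with
`u = ½ (s - 1)^{1/m} - 1`. The Chernoff bound for each of the `2m` variables `±Z_j` and a union
bound give the tail estimate; the Chernoff bound needs `u ≥ 0`, which is what `s ≥ 2^m + 1` ensures.
-/

open MeasureTheory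
open scoped Matrix

/-- The Euclidean (ℓ²) norm of a vector in `ℝ^m`. -/
noncomputable def eucNorm {m : ℕ} (v : Fin m → ℝ) : ℝ :=
  Real.sqrt (∑ i, v i ^ 2)

/-- The ℓ∞ norm `max_j |z j|` (as a natural number) of an integer vector in `ℤ^m`. -/
def zinf {m : ℕ} (z : Fin m → ℤ) : ℕ :=
  Finset.univ.sup fun j => (z j).natAbs

/-- Elementwise rounding to the nearest integer: `[Q x]ᵢ = k` exactly when
`x i ∈ [k - 1/2, k + 1/2)`. -/
noncomputable def roundv {m : ℕ} (x : Fin m → ℝ) : Fin m → ℤ :=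
  fun i => ⌊x i + 1 / 2⌋

/-- A real random variable `X` is `σ`-subgaussian: it is centered and its moment generating
function satisfies `E[exp (l X)] ≤ exp (l² σ² / 2)` for every `l ∈ ℝ`. -/
def RealSubgaussian {Ω : Type*} [MeasurableSpace Ω] (μ : Measure Ω) (σ : ℝ)
    (X : Ω → ℝ) : Prop :=
  Integrable X μ ∧ (∫ ω, X ω ∂μ) = 0 ∧
    ∀ l : ℝ, Integrable (fun ω => Real.exp (l * X ω)) μ ∧
      (∫ ω, Real.exp (l * X ω) ∂μ) ≤ Real.exp (l ^ 2 * σ ^ 2 / 2)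

/-- An `ℝ^m`-valued random vector `X` is `σ`-subgaussian if `cᵀX` is `σ`-subgaussian for
every unit vector `c`. -/
def VecSubgaussian {Ω : Type*} [MeasurableSpace Ω] (μ : Measure Ω) {m : ℕ} (σ : ℝ)
    (X : Ω → Fin m → ℝ) : Prop :=
  ∀ c : Fin m → ℝ, eucNorm c = 1 → RealSubgaussian μ σ (fun ω => c ⬝ᵥ X ω)

open ProbabilityTheory
open scoped NNReal

section SubgaussianTails

variable {Ω : Type*} [MeasurableSpace Ω] {μ : Measure Ω}

lemma RealSubgaussian.hasSubgaussianMGF {σ : ℝ≥0} {X : Ω → ℝ} (hX : RealSubgaussian μ σ X) :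
    HasSubgaussianMGF X (σ ^ 2) μ where
  integrable_exp_mul t := (hX.2.2 t).1
  mgf_le t := by
    rw [NNReal.coe_pow, mul_comm]
    exact (hX.2.2 t).2

lemma eucNorm_single_one {m : ℕ} (j : Fin m) : eucNorm (Pi.single j 1) = 1 := by
  simp [eucNorm, Pi.single_apply]

lemma VecSubgaussian.apply {m : ℕ} {σ : ℝ} {X : Ω → Fin m → ℝ} (hX : VecSubgaussian μ σ X)
    (j : Fin m) : RealSubgaussian μ σ (fun ω => X ω j) := by
  simpa only [single_one_dotProduct] using hX _ (eucNorm_single_one j)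

lemma measureReal_le_abs_le_of_hasSubgaussianMGF {X : Ω → ℝ} {c : ℝ≥0}
    (hX : HasSubgaussianMGF X c μ) {ε : ℝ} (hε : 0 ≤ ε) :
    μ.real {ω | ε ≤ |X ω|} ≤ 2 * Real.exp (-ε ^ 2 / (2 * c)) := by
  have hunion : {ω | ε ≤ |X ω|} = {ω | ε ≤ X ω} ∪ {ω | ε ≤ (-X) ω} := by
    ext ω
    simp only [Set.mem_ofPred_eq, Set.mem_union, Pi.neg_apply, le_abs]
  calc μ.real {ω | ε ≤ |X ω|}
      ≤ μ.real {ω | ε ≤ X ω} + μ.real {ω | ε ≤ (-X) ω} :=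
        hunion ▸ measureReal_union_le _ _
    _ ≤ Real.exp (-ε ^ 2 / (2 * c)) + Real.exp (-ε ^ 2 / (2 * c)) :=
        add_le_add (hX.measure_ge_le hε) (hX.neg.measure_ge_le hε)
    _ = 2 * Real.exp (-ε ^ 2 / (2 * c)) := (two_mul _).symm

variable {ι : Type*} [Fintype ι]

lemma le_pi_norm_iff_exists {E : Type*} [SeminormedAddGroup E] [Nonempty ι] {x : ι → E} {r : ℝ} :
    r ≤ ‖x‖ ↔ ∃ i, r ≤ ‖x i‖ := by
  constructor
  · intro hr
    obtain ⟨i, hi⟩ := (IsGreatest.pi_norm x).1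
    exact ⟨i, hr.trans_eq hi.symm⟩
  · rintro ⟨i, hi⟩
    exact hi.trans (norm_le_pi_norm x i)

lemma measureReal_le_norm_le_of_hasSubgaussianMGF [Nonempty ι] {X : Ω → ι → ℝ} {c : ℝ≥0}
    (hX : ∀ i, HasSubgaussianMGF (fun ω => X ω i) c μ) {ε : ℝ} (hε : 0 ≤ ε) :
    μ.real {ω | ε ≤ ‖X ω‖} ≤ 2 * Fintype.card ι * Real.exp (-ε ^ 2 / (2 * c)) := by
  have hunion : {ω | ε ≤ ‖X ω‖} = ⋃ i, {ω | ε ≤ |X ω i|} := by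
    ext ω
    simp only [Set.mem_ofPred_eq, Set.mem_iUnion, le_pi_norm_iff_exists, Real.norm_eq_abs]
  calc μ.real {ω | ε ≤ ‖X ω‖}
      ≤ ∑ i, μ.real {ω | ε ≤ |X ω i|} := hunion ▸ measureReal_iUnion_fintype_le _
    _ ≤ ∑ _i : ι, 2 * Real.exp (-ε ^ 2 / (2 * c)) :=
        Finset.sum_le_sum fun i _ => measureReal_le_abs_le_of_hasSubgaussianMGF (hX i) hε
    _ = 2 * Fintype.card ι * Real.exp (-ε ^ 2 / (2 * c)) := by
        rw [Finset.sum_const, Finset.card_univ, nsmul_eq_mul]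
        ring

end SubgaussianTails

section Enumeration

lemma coe_le_card_of_surjective {α β : Type*} [LinearOrder β] {N : α → β} {g : α → ℕ+}
    (hg : Function.Surjective g) (hmono : ∀ a b, N b < N a → g b < g a) {a : α} {B : Finset α}
    (hB : ∀ b, N b ≤ N a → b ∈ B) : (g a : ℕ) ≤ B.card := by
  have hsub : Finset.Icc 1 (g a) ⊆ B.image g := by
    intro k hk
    obtain ⟨b, rfl⟩ := hg k
    have hN : N b ≤ N a := not_lt.mp fun h => (hmono b a h).not_ge (Finset.mem_Icc.mp hk).2
    exact Finset.mem_image_of_mem g (hB b hN)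
  calc (g a : ℕ) = (Finset.Icc 1 (g a)).card := by
        rw [PNat.card_Icc, PNat.one_coe, Nat.add_sub_cancel]
    _ ≤ B.card := (Finset.card_le_card hsub).trans Finset.card_image_le

variable {m : ℕ}

lemma zinf_le_iff_mem_Icc {z : Fin m → ℤ} {r : ℕ} :
    zinf z ≤ r ↔ z ∈ Finset.Icc (fun _ => -(r : ℤ)) (fun _ => (r : ℤ)) := by
  simp only [zinf, Finset.sup_le_iff, Finset.mem_univ, true_imp_iff, Finset.mem_Icc, Pi.le_def,
    ← forall_and]
  exact forall_congr' fun j => by omega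

lemma card_Icc_neg_const (m r : ℕ) :
    (Finset.Icc (fun _ : Fin m => -(r : ℤ)) (fun _ => (r : ℤ))).card = (2 * r + 1) ^ m := by
  have hside : ((r : ℤ) + 1 - -r).toNat = 2 * r + 1 := by omega
  simp only [Pi.card_Icc, Int.card_Icc, hside, Finset.prod_const, Finset.card_univ,
    Fintype.card_fin]

lemma coe_le_two_mul_zinf_add_one_pow {g : (Fin m → ℤ) → ℕ+} (hg : Function.Surjective g)
    (hmono : ∀ a b, zinf b < zinf a → g b < g a) (a : Fin m → ℤ) :
    (g a : ℕ) ≤ (2 * zinf a + 1) ^ m :=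
  card_Icc_neg_const m (zinf a) ▸
    coe_le_card_of_surjective hg hmono fun _ => zinf_le_iff_mem_Icc.mp

lemma coe_zinf_eq_norm (z : Fin m → ℤ) : (zinf z : ℝ) = ‖z‖ := by
  rw [Pi.norm_def, zinf, ← NNReal.coe_natCast, Nat.cast_finsetSup]
  simp only [NNReal.natCast_natAbs]

lemma zinf_roundv_le (x : Fin m → ℝ) : (zinf (roundv x) : ℝ) ≤ ‖x‖ + 1 / 2 := by
  rw [coe_zinf_eq_norm, pi_norm_le_iff_of_nonneg (by positivity)]
  intro j
  calc ‖roundv x j‖ = |(round (x j) : ℝ)| := by rw [roundv, ← round_eq, Int.norm_eq_abs]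
    _ ≤ |x j| + |x j - round (x j)| := by
        simpa using abs_sub (x j) (x j - round (x j))
    _ ≤ ‖x‖ + 1 / 2 := add_le_add (norm_le_pi_norm x j) (abs_sub_round _)

lemma half_rpow_inv_sub_one_le_norm (hm : m ≠ 0) {g : (Fin m → ℤ) → ℕ+}
    (hg : Function.Surjective g) (hmono : ∀ a b, zinf b < zinf a → g b < g a) {s : ℕ+}
    {x : Fin m → ℝ} (hs : s ≤ g (roundv x)) :
    (1 / 2) * ((s : ℝ) - 1) ^ (m : ℝ)⁻¹ - 1 ≤ ‖x‖ := by
  have hs_pow : (s : ℝ) ≤ (2 * zinf (roundv x) + 1) ^ m := by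
    exact_mod_cast ((PNat.coe_le_coe s _).mpr hs).trans
      (coe_le_two_mul_zinf_add_one_pow hg hmono (roundv x))
  have hs_one : (1 : ℝ) ≤ s := by exact_mod_cast one_le (a := s)
  have hroot : ((s : ℝ) - 1) ^ (m : ℝ)⁻¹ ≤ 2 * zinf (roundv x) + 1 := by
    rw [Real.rpow_inv_le_iff_of_pos (by linarith) (by positivity) (by positivity),
      Real.rpow_natCast]
    linarith
  linarith [zinf_roundv_le x]

end Enumeration

lemma half_rpow_inv_sub_one_nonneg {m : ℕ} (hm : m ≠ 0) {s : ℝ} (hs : 2 ^ m + 1 ≤ s) :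
    0 ≤ (1 / 2) * (s - 1) ^ (m : ℝ)⁻¹ - 1 := by
  have hpow : (2 : ℝ) ^ m ≤ s - 1 := by linarith
  have hroot : 2 ≤ (s - 1) ^ (m : ℝ)⁻¹ := by
    rwa [Real.le_rpow_inv_iff_of_pos zero_le_two (hpow.trans' (by positivity)) (by positivity),
      Real.rpow_natCast]
  linarith

theorem stmt9_general {Ω : Type*} [MeasurableSpace Ω] (μ : Measure Ω) [IsFiniteMeasure μ]
    {m : ℕ} (hm : 1 ≤ m) (σ : ℝ) (hσ : 0 < σ) (Z : Ω → Fin m → ℝ)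
    (hsub : ∀ j, RealSubgaussian μ σ (fun ω => Z ω j)) (g : (Fin m → ℤ) → ℕ+)
    (hsurj : Function.Surjective g) (hg : ∀ a b : Fin m → ℤ, zinf b < zinf a → g b < g a)
    (s : ℕ+) (hs : 2 ^ m + 1 ≤ (s : ℕ)) :
    μ {ω | s ≤ g (roundv (Z ω))} ≤
      ENNReal.ofReal (2 * m * Real.exp (-(1 / (2 * σ ^ 2)) *
        ((1 / 2) * ((s : ℝ) - 1) ^ ((m : ℝ)⁻¹) - 1) ^ 2)) := by
  lift σ to ℝ≥0 using hσ.le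
  have hm0 : m ≠ 0 := Nat.one_le_iff_ne_zero.mp hm
  have : Nonempty (Fin m) := Fin.pos_iff_nonempty.mp hm
  set u : ℝ := (1 / 2) * ((s : ℝ) - 1) ^ ((m : ℝ)⁻¹) - 1
  have hu : 0 ≤ u := half_rpow_inv_sub_one_nonneg hm0 (by exact_mod_cast hs)
  have hevent : {ω | s ≤ g (roundv (Z ω))} ⊆ {ω | u ≤ ‖Z ω‖} :=
    fun _ => half_rpow_inv_sub_one_le_norm hm0 hsurj hg
  have htail : μ.real {ω | u ≤ ‖Z ω‖} ≤ 2 * m * Real.exp (-u ^ 2 / (2 * (σ : ℝ) ^ 2)) := by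
    simpa using measureReal_le_norm_le_of_hasSubgaussianMGF (fun j => (hsub j).hasSubgaussianMGF) hu
  rw [← ofReal_measureReal, neg_mul, one_div_mul_eq_div, ← neg_div]
  exact ENNReal.ofReal_le_ofReal ((measureReal_mono hevent).trans htail)

/-- Tail bound on the transformed quantizer output: for a `σ`-subgaussian `Z`, elementwise
rounding `Q` and monotone bijection `g : ℤ^m → ℕ₊`, for every integer `s ≥ 2^m + 1`,
`P[g(Q(Z)) = s] ≤ 2m · exp(-(1/(2σ²))·(½(s-1)^{1/m} - 1)²)`. -/
theorem stmt9 {Ω : Type*} [MeasurableSpace Ω] (μ : Measure Ω) [IsProbabilityMeasure μ]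
    {m : ℕ} (hm : 1 ≤ m) (σ : ℝ) (hσ : 0 < σ) (Z : Ω → Fin m → ℝ)
    (hZ : Measurable Z) (hsub : VecSubgaussian μ σ Z)
    (g : (Fin m → ℤ) ≃ ℕ+) (hg : ∀ a b : Fin m → ℤ, zinf b < zinf a → g b < g a)
    (s : ℕ+) (hs : 2 ^ m + 1 ≤ (s : ℕ)) :
    μ {ω | g (roundv (Z ω)) = s} ≤
      ENNReal.ofReal (2 * m * Real.exp (-(1 / (2 * σ ^ 2)) *
        ((1 / 2) * ((s : ℝ) - 1) ^ ((m : ℝ)⁻¹) - 1) ^ 2)) :=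
  (measure_mono fun _ => Eq.ge).trans
    (stmt9_general μ hm σ hσ Z hsub.apply g g.surjective hg s hs)
end

section
/- Let ζ > 0 and m ≥ 1, and let p be a probability mass function on the positive integers such that p(z) ≤ 2m · exp(−ζ((z−1)^{1/m} − 2)²) for all integers z ≥ 2^m + 1. Then there exists β > 2²/(∑_{i=1}^∞ i^{−2}) such that p(z) ≤ min(β z^{−2}, 1) for all positive integers z; i.e., p belongs to the power-law envelope class with parameters (2, β). -/
/-!
A Gaussian in a positive power of `z` decays faster than any power of `z`, so far out `p` lies below
`z ^ (-α)` itself. The finitely many remaining values are absorbed into the constant, which can be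
enlarged past any prescribed bound.
-/

open Filter Asymptotics Real

lemma isTheta_sub_const_rpow (d s : ℝ) :
    (fun x : ℝ ↦ (x - d) ^ s) =Θ[atTop] fun x ↦ x ^ s := by
  have hsub : (fun x : ℝ ↦ x - d) =Θ[atTop] fun x ↦ x :=
    (IsEquivalent.refl.sub_isLittleO (isLittleO_const_id_atTop d)).isTheta
  have hnonneg : ∀ᶠ x : ℝ in atTop, 0 ≤ x - d :=
    (eventually_ge_atTop d).mono fun _ hx ↦ sub_nonneg.2 hx
  exact hsub.rpow hnonneg (eventually_ge_atTop 0)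

lemma exp_neg_mul_sub_sq_isLittleO_rpow {b : ℝ} (hb : 0 < b) (c s : ℝ) :
    (fun x : ℝ ↦ exp (-b * (x - c) ^ 2)) =o[atTop] fun x ↦ x ^ s := by
  have hcentered : (fun x : ℝ ↦ exp (-b * x ^ 2)) =o[atTop] fun x ↦ x ^ s :=
    (exp_neg_mul_sq_isLittleO_exp_neg hb).trans
      (by simpa only [neg_one_mul] using isLittleO_exp_neg_mul_rpow_atTop one_pos s)
  have hshift : Tendsto (fun x : ℝ ↦ x - c) atTop atTop :=
    tendsto_atTop_add_const_right _ (-c) tendsto_id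
  exact (hcentered.comp_tendsto hshift).trans_isTheta (isTheta_sub_const_rpow c s)

lemma exp_neg_mul_rpow_sub_sq_isLittleO_rpow {b a : ℝ} (hb : 0 < b) (ha : 0 < a) (c s : ℝ) :
    (fun x : ℝ ↦ exp (-b * (x ^ a - c) ^ 2)) =o[atTop] fun x ↦ x ^ s := by
  refine ((exp_neg_mul_sub_sq_isLittleO_rpow hb c (s / a)).comp_tendsto
    (tendsto_rpow_atTop ha)).congr' .rfl ?_
  filter_upwards [eventually_ge_atTop 0] with x hx
  rw [Function.comp_apply, ← rpow_mul hx, mul_div_cancel₀ s ha.ne']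

lemma exp_neg_mul_sub_rpow_sub_sq_isLittleO_rpow {b a : ℝ} (hb : 0 < b) (ha : 0 < a)
    (c d s : ℝ) :
    (fun x : ℝ ↦ exp (-b * ((x - d) ^ a - c) ^ 2)) =o[atTop] fun x ↦ x ^ s :=
  ((exp_neg_mul_rpow_sub_sq_isLittleO_rpow hb ha c s).comp_tendsto
    (tendsto_atTop_add_const_right _ (-d) tendsto_id)).trans_isTheta (isTheta_sub_const_rpow d s)

lemma cofinite_le_atTop {ι : Type*} [LinearOrder ι] [LocallyFiniteOrderBot ι] :
    (cofinite : Filter ι) ≤ atTop :=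
  le_iInf fun a ↦ le_principal_iff.2 <| by
    simpa only [mem_cofinite, Set.compl_Ici] using Set.finite_Iio a

lemma exists_gt_forall_le_div_of_eventually_cofinite {ι : Type*} {f w : ι → ℝ}
    (hw : ∀ i, 0 < w i) {C : ℝ} (hf : ∀ᶠ i in cofinite, f i ≤ C / w i) (B : ℝ) :
    ∃ β, B < β ∧ ∀ i, f i ≤ β / w i := by
  have hbdd : IsBoundedUnder (· ≤ ·) cofinite fun i ↦ f i * w i :=
    isBoundedUnder_of_eventually_le (hf.mono fun i hi ↦ (le_div_iff₀ (hw i)).1 hi)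
  obtain ⟨M, hM⟩ := hbdd.bddAbove_range_of_cofinite
  refine ⟨max M (B + 1), lt_max_of_lt_right (lt_add_one B), fun i ↦ ?_⟩
  exact (le_div_iff₀ (hw i)).2 ((hM (Set.mem_range_self i)).trans (le_max_left _ _))

theorem stmt11_general {ζ a : ℝ} (hζ : 0 < ζ) (ha : 0 < a) (A c d α : ℝ) {p : ℕ+ → ℝ}
    (henv : ∀ᶠ z : ℕ+ in atTop, p z ≤ A * exp (-ζ * (((z : ℝ) - d) ^ a - c) ^ 2)) (B : ℝ) :
    ∃ β, B < β ∧ ∀ z : ℕ+, p z ≤ β / (z : ℝ) ^ α := by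
  have hdecay := (exp_neg_mul_sub_rpow_sub_sq_isLittleO_rpow hζ ha c d (-α)).const_mul_left A
  have hcast : Tendsto (fun z : ℕ+ ↦ (z : ℝ)) atTop atTop :=
    tendsto_natCast_atTop_atTop.comp tendsto_PNat_val_atTop_atTop
  have htail : ∀ᶠ z : ℕ+ in atTop, p z ≤ 1 / (z : ℝ) ^ α := by
    filter_upwards [henv, hcast.eventually hdecay.eventuallyLE] with z hpz hz
    calc p z ≤ A * exp (-ζ * (((z : ℝ) - d) ^ a - c) ^ 2) := hpz
      _ ≤ ‖(z : ℝ) ^ (-α)‖ := (le_norm_self _).trans hz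
      _ = 1 / (z : ℝ) ^ α := by
        rw [norm_of_nonneg (by positivity), rpow_neg (by positivity), one_div]
  exact exists_gt_forall_le_div_of_eventually_cofinite (fun z ↦ by positivity)
    (htail.filter_mono cofinite_le_atTop) B

/-- If a probability mass function `p` on the positive integers satisfies
`p z ≤ 2m·exp(-ζ((z-1)^{1/m} - 2)²)` for all `z ≥ 2^m + 1`, then `p` belongs to the
power-law envelope class with parameters `(2, β)` for some admissible `β`. -/
theorem stmt11 (ζ : ℝ) (hζ : 0 < ζ) (m : ℕ) (hm : 1 ≤ m) (p : ℕ+ → ℝ)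
    (hp0 : ∀ z : ℕ+, 0 ≤ p z) (hp1 : HasSum p 1)
    (henv : ∀ z : ℕ+, 2 ^ m + 1 ≤ (z : ℕ) →
      p z ≤ 2 * m * Real.exp (-ζ * (((z : ℝ) - 1) ^ ((m : ℝ)⁻¹) - 2) ^ 2)) :
    ∃ β : ℝ, (2 : ℝ) ^ 2 / (∑' i : ℕ+, 1 / (i : ℝ) ^ 2) < β ∧
      ∀ z : ℕ+, p z ≤ min (β / (z : ℝ) ^ 2) 1 := by
  have hle_one (z : ℕ+) : p z ≤ 1 := le_hasSum hp1 z fun j _ ↦ hp0 j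
  have htail := (eventually_ge_atTop (⟨2 ^ m + 1, Nat.succ_pos _⟩ : ℕ+)).mono henv
  obtain ⟨β, hβ, hpβ⟩ := stmt11_general hζ (inv_pos.2 (Nat.cast_pos.2 hm)) _ 2 1 2 htail _
  exact ⟨β, hβ, fun z ↦ le_min (by simpa only [rpow_two] using hpβ z) (hle_one z)⟩
end

section
/- Let ζ > 0 and let p be a probability mass function on the positive integers such that p(z) ≤ 4 · exp(−ζ(√(z−1) − 2)²) for all integers z ≥ 5. Then there exists β > e^{ζ} such that p(z) ≤ min(β e^{−(ζ/2) z}, 1) for all positive integers z; i.e., p belongs to the exponential envelope class with parameters (ζ/2, β). -/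
/-!
Since `s ^ 2 ≤ 2 * ((s - a) ^ 2 + a ^ 2)`, taking `s = √(x - b)` shows that `(√(x - b) - a) ^ 2`
is at least `x / 2` up to a constant, so the given bound decays at least as fast as
`exp (-(ζ / 2) * x)`. The finitely many remaining points are absorbed by enlarging `β`, which also
makes `β` exceed any prescribed number.
-/

open Filter Real

lemma half_sub_sq_le_sqrt_sub_sq {x : ℝ} (hx : 0 ≤ x) (a : ℝ) :
    x / 2 - a ^ 2 ≤ (√x - a) ^ 2 := by
  have h_add_sq : (√x - a + a) ^ 2 ≤ 2 * ((√x - a) ^ 2 + a ^ 2) := add_sq_le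
  rw [sub_add_cancel, sq_sqrt hx] at h_add_sq
  linarith

lemma exp_neg_mul_sqrt_sub_sub_sq_le {ζ b x : ℝ} (hζ : 0 ≤ ζ) (hx : b ≤ x) (a : ℝ) :
    exp (-ζ * (√(x - b) - a) ^ 2) ≤ exp (ζ * (a ^ 2 + b / 2)) * exp (-(ζ / 2) * x) := by
  rw [← exp_add, exp_le_exp]
  calc -ζ * (√(x - b) - a) ^ 2
      ≤ -ζ * ((x - b) / 2 - a ^ 2) :=
        mul_le_mul_of_nonpos_left (half_sub_sq_le_sqrt_sub_sq (sub_nonneg.mpr hx) a)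
          (neg_nonpos.mpr hζ)
    _ = ζ * (a ^ 2 + b / 2) + -(ζ / 2) * x := by ring

lemma exists_gt_forall_le_mul_of_eventually_cofinite {ι : Type*} {f g : ι → ℝ} {K : ℝ}
    (hg : ∀ i, 0 < g i) (hfg : ∀ᶠ i in cofinite, f i ≤ K * g i) (B : ℝ) :
    ∃ β > B, ∀ i, f i ≤ β * g i := by
  have h_bdd : BddAbove (Set.range fun i ↦ f i / g i) :=
    (isBoundedUnder_of_eventually_le <|
      hfg.mono fun i hi ↦ (div_le_iff₀ (hg i)).mpr hi).bddAbove_range_of_cofinite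
  obtain ⟨β, hBβ, hβ⟩ := h_bdd.exists_ge (B + 1)
  exact ⟨β, (lt_add_one B).trans_le hBβ, fun i ↦
    (div_le_iff₀ (hg i)).mp (hβ _ (Set.mem_range_self i))⟩

theorem stmt13_general {ι : Type*} {x p : ι → ℝ} {ζ C a b : ℝ} (hζ : 0 ≤ ζ)
    (hx : ∀ i, b ≤ x i) (hp : ∀ i, p i ≤ 1)
    (henv : ∀ᶠ i in cofinite, p i ≤ C * exp (-ζ * (√(x i - b) - a) ^ 2)) (B : ℝ) :
    ∃ β > B, ∀ i, p i ≤ min (β * exp (-(ζ / 2) * x i)) 1 := by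
  have h_exp : ∀ᶠ i in cofinite,
      p i ≤ |C| * exp (ζ * (a ^ 2 + b / 2)) * exp (-(ζ / 2) * x i) := by
    filter_upwards [henv] with i hi
    calc p i ≤ C * exp (-ζ * (√(x i - b) - a) ^ 2) := hi
      _ ≤ |C| * exp (-ζ * (√(x i - b) - a) ^ 2) := by gcongr; exact le_abs_self C
      _ ≤ |C| * (exp (ζ * (a ^ 2 + b / 2)) * exp (-(ζ / 2) * x i)) := by
        gcongr; exact exp_neg_mul_sqrt_sub_sub_sq_le hζ (hx i) a
      _ = |C| * exp (ζ * (a ^ 2 + b / 2)) * exp (-(ζ / 2) * x i) := (mul_assoc _ _ _).symm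
  obtain ⟨β, hβ, h_le⟩ :=
    exists_gt_forall_le_mul_of_eventually_cofinite (fun i ↦ exp_pos (-(ζ / 2) * x i)) h_exp B
  exact ⟨β, hβ, fun i ↦ le_min (h_le i) (hp i)⟩

/-- If a probability mass function `p` on the positive integers satisfies
`p z ≤ 4·exp(-ζ(√(z-1) - 2)²)` for all `z ≥ 5`, then `p` belongs to the exponential
envelope class with parameters `(ζ/2, β)` for some admissible `β`. -/
theorem stmt13 (ζ : ℝ) (hζ : 0 < ζ) (p : ℕ+ → ℝ)
    (hp0 : ∀ z : ℕ+, 0 ≤ p z) (hp1 : HasSum p 1)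
    (henv : ∀ z : ℕ+, 5 ≤ (z : ℕ) →
      p z ≤ 4 * Real.exp (-ζ * (Real.sqrt ((z : ℝ) - 1) - 2) ^ 2)) :
    ∃ β : ℝ, Real.exp ζ < β ∧
      ∀ z : ℕ+, p z ≤ min (β * Real.exp (-(ζ / 2) * (z : ℝ))) 1 :=
  have h_ge : ∀ᶠ z : ℕ+ in cofinite, 5 ≤ z :=
    (Set.finite_Iio 5).eventually_cofinite_notMem.mono fun _ ↦ not_lt.mp
  stmt13_general hζ.le (fun z ↦ Nat.one_le_cast.mpr z.pos)
    (fun z ↦ le_hasSum hp1 z fun j _ ↦ hp0 j) (h_ge.mono henv) (exp ζ)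
end
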